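/- For the spherical normal model with unknown variance of dimension d ≥ 2, the three cumulant contractions appearing in the first-order term take the constant values: Σ κ_{i_1 i_2 i_3 i_4} g^{i_1 i_2} g^{i_3 i_4} = (8d+4)/(d-1), Σ κ_{i_1 i_2 i_3} κ_{i_4 i_5 i_6} g^{i_1 i_2} g^{i_3 i_4} g^{i_5 i_6} = (2d² + 4d + 2)/(d-1), and Σ κ_{i_1 i_2 i_3} κ_{i_4 i_5 i_6} g^{i_1 i_4} g^{i_2 i_5} g^{i_3 i_6} = (6d+2)/(d-1), so that F₁ = (1/8)(8d+4)/(d-1) - (1/8)(2d²+4d+2)/(d-1) - (1/12)(6d+2)/(d-1) = (1 - 3d²)/(12(d-1)). -/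

import Mathlib

open Real Matrix

/-- The `i`-th partial derivative of a function on `ℝ^d`. -/
noncomputable def pd {d : ℕ} (i : Fin d) (f : (Fin d → ℝ) → ℝ) : (Fin d → ℝ) → ℝ :=
  fun x => fderiv ℝ f x (Pi.single i 1)

/-- The log-partition function of the spherical normal family `N_{d-1}(β, σ² I_{d-1})` in its
natural parameterisation, with `d = k + 1`:
`ψ(θ) = ((1-d)/2) log(-2θ_d) - (θ_1² + ... + θ_{d-1}²)/(4θ_d)`. -/
noncomputable def psiSph (k : ℕ) (θ : Fin (k + 1) → ℝ) : ℝ :=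
  ((1 - ((k : ℝ) + 1)) / 2) * Real.log (-2 * θ (Fin.last k)) -
    (∑ i : Fin k, θ (Fin.castSucc i) ^ 2) / (4 * θ (Fin.last k))

/-- The Fisher information metric of the spherical normal family in natural parameters:
the Hessian `g_{ij}(θ) = ∂²ψ/∂θ_i∂θ_j`. -/
noncomputable def gSph (k : ℕ) (θ : Fin (k + 1) → ℝ) :
    Matrix (Fin (k + 1)) (Fin (k + 1)) ℝ :=
  Matrix.of fun i j => pd i (pd j (psiSph k)) θ

/-- The mixed partial derivative along a list of coordinate indices; for the natural
exponential family, `κ_{i_1...i_r}(θ) = ∂^r ψ/∂θ_{i_1}⋯∂θ_{i_r}` is the cumulant. -/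
noncomputable def lderiv {d : ℕ} (l : List (Fin d)) (f : (Fin d → ℝ) → ℝ) :
    (Fin d → ℝ) → ℝ :=
  l.foldr (fun i g => pd i g) f

/-- The coefficients of a function `α / t ^ n + (∑ β i * x i) / t ^ m + γ * (∑ x i ^ 2) / t ^ (n + 1)`,
where `t` is the last coordinate and `x` the vector of the other ones. -/
structure SphCoef (k : ℕ) where
  α : ℝ
  β : Fin k → ℝ
  γ : ℝ
  n : ℕ
  m : ℕ

namespace SphCoef

/-- The function with the given coefficients. -/
noncomputable def eval {k : ℕ} (c : SphCoef k) (x : Fin (k + 1) → ℝ) : ℝ :=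
  c.α / x (Fin.last k) ^ c.n + (∑ i, c.β i * x (Fin.castSucc i)) / x (Fin.last k) ^ c.m +
    c.γ * (∑ i : Fin k, x (Fin.castSucc i) ^ 2) / x (Fin.last k) ^ (c.n + 1)

/-- The coefficients of a partial derivative. -/
noncomputable def diff {k : ℕ} (i : Fin (k + 1)) (c : SphCoef k) : SphCoef k :=
  Fin.lastCases (motive := fun _ => SphCoef k)
    ⟨-c.n * c.α, fun j => -c.m * c.β j, -(c.n + 1) * c.γ, c.n + 1, c.m + 1⟩
    (fun j => ⟨c.β j, Pi.single j (2 * c.γ), 0, c.m, c.n + 1⟩) i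

/-- The coefficients of the partial derivatives of `psiSph`. -/
noncomputable def gradPsi {k : ℕ} (i : Fin (k + 1)) : SphCoef k :=
  Fin.lastCases (motive := fun _ => SphCoef k)
    ⟨-k / 2, 0, 1 / 4, 1, 0⟩ (fun j => ⟨0, Pi.single j (-1 / 2), 0, 0, 1⟩) i

end SphCoef

theorem hasFDerivAt_sum_sq_castSucc {k : ℕ} (x : Fin (k + 1) → ℝ) :
    HasFDerivAt (fun y : Fin (k + 1) → ℝ => ∑ i : Fin k, y (Fin.castSucc i) ^ 2)
      (∑ i : Fin k, (2 * x (Fin.castSucc i)) •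
        ContinuousLinearMap.proj (R := ℝ) (φ := fun _ => ℝ) (Fin.castSucc i)) x := by
  refine HasFDerivAt.fun_sum fun i _ => ?_
  simpa using (hasFDerivAt_apply (𝕜 := ℝ) (F' := fun _ => ℝ) (Fin.castSucc i) x).pow 2

theorem hasFDerivAt_sum_mul_castSucc {k : ℕ} (β : Fin k → ℝ) (x : Fin (k + 1) → ℝ) :
    HasFDerivAt (fun y : Fin (k + 1) → ℝ => ∑ i : Fin k, β i * y (Fin.castSucc i))
      (∑ i : Fin k, β i •
        ContinuousLinearMap.proj (R := ℝ) (φ := fun _ => ℝ) (Fin.castSucc i)) x :=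
  HasFDerivAt.fun_sum fun i _ =>
    (hasFDerivAt_apply (𝕜 := ℝ) (F' := fun _ => ℝ) (Fin.castSucc i) x).const_mul (β i)

theorem hasFDerivAt_last_pow_inv {k : ℕ} (n : ℕ) {x : Fin (k + 1) → ℝ}
    (hx : x (Fin.last k) ≠ 0) :
    HasFDerivAt (fun y : Fin (k + 1) → ℝ => (y (Fin.last k) ^ n)⁻¹)
      ((-n / x (Fin.last k) ^ (n + 1)) •
        ContinuousLinearMap.proj (R := ℝ) (φ := fun _ => ℝ) (Fin.last k)) x := by
  have h : HasDerivAt (fun s : ℝ => (s ^ n)⁻¹) (-n / x (Fin.last k) ^ (n + 1))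
      (x (Fin.last k)) := by
    refine ((hasDerivAt_pow n (x (Fin.last k))).fun_inv (pow_ne_zero n hx)).congr_deriv ?_
    rcases n with _ | n
    · simp
    · simp only [Nat.add_sub_cancel]
      field_simp
      ring
  exact h.comp_hasFDerivAt (f := fun y : Fin (k + 1) → ℝ => y (Fin.last k)) x
    (hasFDerivAt_apply (𝕜 := ℝ) (F' := fun _ => ℝ) (Fin.last k) x)

theorem pd_eval {k : ℕ} (i : Fin (k + 1)) (c : SphCoef k) {x : Fin (k + 1) → ℝ}
    (hx : x (Fin.last k) ≠ 0) : pd i c.eval x = (c.diff i).eval x := by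
  have h := (((hasFDerivAt_last_pow_inv c.n hx).const_mul c.α).add
    ((hasFDerivAt_sum_mul_castSucc c.β x).mul (hasFDerivAt_last_pow_inv c.m hx))).add
    (((hasFDerivAt_sum_sq_castSucc x).const_mul c.γ).mul (hasFDerivAt_last_pow_inv (c.n + 1) hx))
  have h' : HasFDerivAt c.eval _ x := h
  rw [pd, h'.fderiv]
  refine Fin.lastCases ?_ (fun j => ?_) i
  · simp [SphCoef.eval, SphCoef.diff, (Fin.castSucc_lt_last _).ne, mul_assoc,
      ← Finset.mul_sum]
    ring
  · simp [SphCoef.eval, SphCoef.diff, Pi.single_apply, (Fin.castSucc_lt_last _).ne']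
    ring

theorem pd_psiSph {k : ℕ} (i : Fin (k + 1)) {x : Fin (k + 1) → ℝ}
    (hx : x (Fin.last k) < 0) : pd i (psiSph k) x = (SphCoef.gradPsi i).eval x := by
  have hl : HasFDerivAt (fun y : Fin (k + 1) → ℝ => Real.log (-2 * y (Fin.last k)))
      ((x (Fin.last k))⁻¹ •
        ContinuousLinearMap.proj (R := ℝ) (φ := fun _ => ℝ) (Fin.last k)) x := by
    have h : HasDerivAt (fun s : ℝ => Real.log (-2 * s)) (x (Fin.last k))⁻¹ (x (Fin.last k)) := by
      refine (((hasDerivAt_id' (x (Fin.last k))).const_mul (-2)).log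
        (by simpa using hx.ne)).congr_deriv ?_
      field_simp
    exact h.comp_hasFDerivAt x (hasFDerivAt_apply (𝕜 := ℝ) (F' := fun _ => ℝ) (Fin.last k) x)
  have h := (hl.const_mul ((1 - ((k : ℝ) + 1)) / 2)).sub
    (((hasFDerivAt_sum_sq_castSucc x).mul (hasFDerivAt_last_pow_inv 1 hx.ne)).const_mul (1 / 4))
  have h' : HasFDerivAt (psiSph k) _ x := h.congr_of_eventuallyEq (.of_forall fun y => by
    simp [psiSph]; ring)
  rw [pd, h'.fderiv]
  refine Fin.lastCases ?_ (fun j => ?_) i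
  · simp [SphCoef.eval, SphCoef.gradPsi, (Fin.castSucc_lt_last _).ne]
    ring
  · simp [SphCoef.eval, SphCoef.gradPsi, Pi.single_apply, (Fin.castSucc_lt_last _).ne']
    ring

theorem lderiv_psiSph {k : ℕ} (l : List (Fin (k + 1))) (i : Fin (k + 1)) {x : Fin (k + 1) → ℝ}
    (hx : x (Fin.last k) < 0) :
    lderiv (l ++ [i]) (psiSph k) x = (l.foldr SphCoef.diff (SphCoef.gradPsi i)).eval x := by
  induction l generalizing x with
  | nil => exact pd_psiSph i hx
  | cons j l ih =>
    have hev : lderiv (l ++ [i]) (psiSph k) =ᶠ[nhds x]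
        (l.foldr SphCoef.diff (SphCoef.gradPsi i)).eval := by
      filter_upwards [(isOpen_Iio.preimage (continuous_apply (Fin.last k))).mem_nhds hx]
        with y hy using ih hy
    change pd j (lderiv (l ++ [i]) (psiSph k)) x = _
    rw [pd, hev.fderiv_eq]
    exact pd_eval j _ hx.ne

/-- The inverse of the Fisher metric of the spherical normal family. -/
noncomputable def gInvSph (k : ℕ) (θ : Fin (k + 1) → ℝ) :
    Matrix (Fin (k + 1)) (Fin (k + 1)) ℝ :=
  Matrix.of fun i j =>
    Fin.lastCases (motive := fun _ => ℝ)
      (Fin.lastCases (motive := fun _ => ℝ) (2 * θ (Fin.last k) ^ 2 / k)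
        (fun b => 2 * θ (Fin.last k) * θ (Fin.castSucc b) / k) j)
      (fun a => Fin.lastCases (motive := fun _ => ℝ) (2 * θ (Fin.last k) * θ (Fin.castSucc a) / k)
        (fun b => (if a = b then -2 * θ (Fin.last k) else 0) +
          2 * θ (Fin.castSucc a) * θ (Fin.castSucc b) / k) j) i

theorem gSph_inv {k : ℕ} (hk : 1 ≤ k) {θ : Fin (k + 1) → ℝ} (hθ : θ (Fin.last k) < 0) :
    (gSph k θ)⁻¹ = gInvSph k θ := by
  refine Matrix.inv_eq_right_inv ?_
  have hg : ∀ i j, gSph k θ i j = ((SphCoef.gradPsi j).diff i).eval θ := fun i j =>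
    lderiv_psiSph [i] j hθ
  have ht := hθ.ne
  have hk' : (k : ℝ) ≠ 0 := by positivity
  ext i j
  rw [Matrix.mul_apply, Fin.sum_univ_castSucc]
  simp only [hg]
  refine Fin.lastCases ?_ (fun a => ?_) i <;> refine Fin.lastCases ?_ (fun b => ?_) j <;>
    simp [SphCoef.eval, SphCoef.diff, SphCoef.gradPsi, gInvSph, Pi.single_apply,
      Matrix.one_apply, mul_add, add_mul, Finset.sum_add_distrib, ite_div, ite_mul,
      (Fin.castSucc_lt_last _).ne'] <;>
    ring_nf <;> (try simp only [← Finset.mul_sum, ← Finset.sum_mul]) <;> (try split_ifs) <;>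
    field_simp <;> ring

/-- The third cumulants with the first index raised, `κ_{bc}^a`. -/
noncomputable def kappaRaised (k : ℕ) (θ : Fin (k + 1) → ℝ) (a b c : Fin (k + 1)) : ℝ :=
  Fin.lastCases (motive := fun _ => ℝ)
    (Fin.lastCases (motive := fun _ => ℝ)
      (Fin.lastCases (motive := fun _ => ℝ)
        (-2 / θ (Fin.last k) + (∑ i : Fin k, θ (Fin.castSucc i) ^ 2) / (k * θ (Fin.last k) ^ 2))
        (fun a => (∑ i : Fin k, θ (Fin.castSucc i) ^ 2) * θ (Fin.castSucc a) /
          (k * θ (Fin.last k) ^ 3)) a)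
      (fun c => Fin.lastCases (motive := fun _ => ℝ)
        (-θ (Fin.castSucc c) / (k * θ (Fin.last k)))
        (fun a => (if a = c then -1 / θ (Fin.last k) else 0) -
          θ (Fin.castSucc a) * θ (Fin.castSucc c) / (k * θ (Fin.last k) ^ 2)) a) c)
    (fun b => Fin.lastCases (motive := fun _ => ℝ)
      (Fin.lastCases (motive := fun _ => ℝ)
        (-θ (Fin.castSucc b) / (k * θ (Fin.last k)))
        (fun a => (if a = b then -1 / θ (Fin.last k) else 0) -
          θ (Fin.castSucc a) * θ (Fin.castSucc b) / (k * θ (Fin.last k) ^ 2)) a)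
      (fun c => Fin.lastCases (motive := fun _ => ℝ)
        (if b = c then 1 / (k : ℝ) else 0)
        (fun a => if b = c then θ (Fin.castSucc a) / (k * θ (Fin.last k)) else 0) a) c) b

theorem sum_lderiv_mul_gInvSph_fst {k : ℕ} (hk : 1 ≤ k) {θ : Fin (k + 1) → ℝ}
    (hθ : θ (Fin.last k) < 0) (a b c : Fin (k + 1)) :
    ∑ i, lderiv [i, b, c] (psiSph k) θ * gInvSph k θ i a = kappaRaised k θ a b c := by
  have ht := hθ.ne
  have hk' : (k : ℝ) ≠ 0 := by positivity
  have hK : ∀ i, lderiv [i, b, c] (psiSph k) θ =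
      (((SphCoef.gradPsi c).diff b).diff i).eval θ := fun i => lderiv_psiSph [i, b] c hθ
  rw [Fin.sum_univ_castSucc]
  simp only [hK]
  refine Fin.lastCases ?_ (fun a => ?_) a <;> refine Fin.lastCases ?_ (fun b => ?_) b <;>
    refine Fin.lastCases ?_ (fun c => ?_) c <;>
    simp [SphCoef.eval, SphCoef.diff, SphCoef.gradPsi, gInvSph, kappaRaised, Pi.single_apply,
      mul_add, add_mul, Finset.sum_add_distrib, ite_div, ite_mul] <;>
    ring_nf <;>
    (try simp only [Finset.sum_neg_distrib, ← Finset.mul_sum, ← Finset.sum_mul]) <;>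
    (try split_ifs) <;> (try subst_vars) <;> field_simp <;> ring1

theorem sum_lderiv_mul_gInvSph_snd {k : ℕ} (hk : 1 ≤ k) {θ : Fin (k + 1) → ℝ}
    (hθ : θ (Fin.last k) < 0) (a b c : Fin (k + 1)) :
    ∑ i, lderiv [b, i, c] (psiSph k) θ * gInvSph k θ a i = kappaRaised k θ a b c := by
  have ht := hθ.ne
  have hk' : (k : ℝ) ≠ 0 := by positivity
  have hK : ∀ i, lderiv [b, i, c] (psiSph k) θ =
      (((SphCoef.gradPsi c).diff i).diff b).eval θ := fun i => lderiv_psiSph [b, i] c hθ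
  rw [Fin.sum_univ_castSucc]
  simp only [hK]
  refine Fin.lastCases ?_ (fun a => ?_) a <;> refine Fin.lastCases ?_ (fun b => ?_) b <;>
    refine Fin.lastCases ?_ (fun c => ?_) c <;>
    simp [SphCoef.eval, SphCoef.diff, SphCoef.gradPsi, gInvSph, kappaRaised, Pi.single_apply,
      mul_add, add_mul, Finset.sum_add_distrib, ite_div, ite_mul] <;>
    ring_nf <;>
    (try simp only [Finset.sum_neg_distrib, ← Finset.mul_sum, ← Finset.sum_mul]) <;>
    (try split_ifs) <;> (try subst_vars) <;> first | (field_simp <;> ring1) | simp_all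

/-- Both quadratic contractions of the cumulants have this shape, with `p = 2k + 6` and
`p = k + 4` respectively. -/
noncomputable def contrSph (k : ℕ) (p : ℝ) (θ : Fin (k + 1) → ℝ) (i j : Fin (k + 1)) : ℝ :=
  Fin.lastCases (motive := fun _ => ℝ)
    (Fin.lastCases (motive := fun _ => ℝ)
      (p / θ (Fin.last k) ^ 2 -
        2 * (∑ i : Fin k, θ (Fin.castSucc i) ^ 2) / (k * θ (Fin.last k) ^ 3))
      (fun b => 2 * θ (Fin.castSucc b) / (k * θ (Fin.last k) ^ 2)) j)
    (fun a => Fin.lastCases (motive := fun _ => ℝ)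
      (2 * θ (Fin.castSucc a) / (k * θ (Fin.last k) ^ 2))
      (fun b => if a = b then -2 / (k * θ (Fin.last k)) else 0) j) i

theorem sum_contrSph_mul_gInvSph {k : ℕ} (hk : 1 ≤ k) (p : ℝ) {θ : Fin (k + 1) → ℝ}
    (hθ : θ (Fin.last k) < 0) :
    ∑ i, ∑ j, contrSph k p θ i j * gInvSph k θ i j = (4 * k + 2 * p) / k := by
  have ht := hθ.ne
  have hk' : (k : ℝ) ≠ 0 := by positivity
  simp [Fin.sum_univ_castSucc, contrSph, gInvSph, mul_add, Finset.sum_add_distrib, ite_mul]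
  ring_nf
  simp only [Finset.sum_neg_distrib, ← Finset.mul_sum, ← Finset.sum_mul]
  field_simp
  ring

theorem sum_kappaRaised_mul_kappaRaised {k : ℕ} (hk : 1 ≤ k) {θ : Fin (k + 1) → ℝ}
    (hθ : θ (Fin.last k) < 0) (i j : Fin (k + 1)) :
    ∑ p, ∑ q, kappaRaised k θ p q i * kappaRaised k θ q p j = contrSph k (k + 4) θ i j := by
  have ht := hθ.ne
  have hk' : (k : ℝ) ≠ 0 := by positivity
  refine Fin.lastCases ?_ (fun a => ?_) i <;> refine Fin.lastCases ?_ (fun b => ?_) j <;>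
    simp [Fin.sum_univ_castSucc, contrSph, kappaRaised, mul_add, add_mul, mul_sub, sub_mul,
      Finset.sum_add_distrib, Finset.sum_sub_distrib, ite_mul] <;>
    ring_nf <;>
    (try simp only [Finset.sum_neg_distrib, ← Finset.mul_sum, ← Finset.sum_mul]) <;>
    (try split_ifs) <;> (try subst_vars) <;> first | (field_simp <;> ring1) | simp_all

theorem sum_lderiv_four_mul_gInvSph {k : ℕ} (hk : 1 ≤ k) {θ : Fin (k + 1) → ℝ}
    (hθ : θ (Fin.last k) < 0) (a b : Fin (k + 1)) :
    ∑ i, ∑ j, lderiv [i, j, a, b] (psiSph k) θ * gInvSph k θ i j =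
      contrSph k (2 * k + 6) θ a b := by
  have ht := hθ.ne
  have hk' : (k : ℝ) ≠ 0 := by positivity
  have hK : ∀ i j, lderiv [i, j, a, b] (psiSph k) θ =
      ((((SphCoef.gradPsi b).diff a).diff j).diff i).eval θ :=
    fun i j => lderiv_psiSph [i, j, a] b hθ
  simp only [hK]
  refine Fin.lastCases ?_ (fun a => ?_) a <;> refine Fin.lastCases ?_ (fun b => ?_) b <;>
    simp [Fin.sum_univ_castSucc, SphCoef.eval, SphCoef.diff, SphCoef.gradPsi, gInvSph, contrSph,
      Pi.single_apply, mul_add, add_mul, Finset.sum_add_distrib, ite_div, ite_mul] <;>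
    ring_nf <;>
    (try simp only [ite_mul, one_mul, zero_mul, Finset.sum_ite_eq', Finset.mem_univ, if_true,
      Finset.sum_neg_distrib, ← Finset.mul_sum, ← Finset.sum_mul]) <;>
    (try split_ifs) <;> (try subst_vars) <;> field_simp <;> ring1

/-- The trace of the third cumulants. -/
noncomputable def kappaTrace (k : ℕ) (θ : Fin (k + 1) → ℝ) (i : Fin (k + 1)) : ℝ :=
  Fin.lastCases (motive := fun _ => ℝ) (-(k + 2) / θ (Fin.last k)) (fun _ => 0) i

theorem sum_kappaRaised {k : ℕ} (hk : 1 ≤ k) {θ : Fin (k + 1) → ℝ}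
    (hθ : θ (Fin.last k) < 0) (c : Fin (k + 1)) :
    ∑ a, kappaRaised k θ a a c = kappaTrace k θ c := by
  have ht := hθ.ne
  have hk' : (k : ℝ) ≠ 0 := by positivity
  refine Fin.lastCases ?_ (fun c => ?_) c <;>
    simp [Fin.sum_univ_castSucc, kappaRaised, kappaTrace, Finset.sum_sub_distrib]
  · ring_nf
    simp only [← Finset.mul_sum, ← Finset.sum_mul]
    field_simp
    ring
  · ring

theorem sum_kappaRaised' {k : ℕ} (hk : 1 ≤ k) {θ : Fin (k + 1) → ℝ}
    (hθ : θ (Fin.last k) < 0) (c : Fin (k + 1)) :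
    ∑ a, kappaRaised k θ a c a = kappaTrace k θ c := by
  have ht := hθ.ne
  have hk' : (k : ℝ) ≠ 0 := by positivity
  refine Fin.lastCases ?_ (fun c => ?_) c <;>
    simp [Fin.sum_univ_castSucc, kappaRaised, kappaTrace, Finset.sum_sub_distrib]
  · ring_nf
    simp only [← Finset.mul_sum, ← Finset.sum_mul]
    field_simp
    ring
  · ring

theorem sum_kappaTrace_mul_kappaTrace {k : ℕ} (hk : 1 ≤ k) {θ : Fin (k + 1) → ℝ}
    (hθ : θ (Fin.last k) < 0) :
    ∑ i, ∑ j, kappaTrace k θ i * kappaTrace k θ j * gInvSph k θ i j =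
      2 * ((k : ℝ) + 2) ^ 2 / k := by
  have ht := hθ.ne
  have hk' : (k : ℝ) ≠ 0 := by positivity
  simp [Fin.sum_univ_castSucc, kappaTrace, gInvSph]
  field_simp
  ring

theorem gInvSph_symm (k : ℕ) (θ : Fin (k + 1) → ℝ) (i j : Fin (k + 1)) :
    gInvSph k θ i j = gInvSph k θ j i := by
  refine Fin.lastCases ?_ (fun a => ?_) i <;> refine Fin.lastCases ?_ (fun b => ?_) j <;>
    simp [gInvSph, mul_right_comm, eq_comm]

theorem sum_rotate_three {ι M : Type*} [Fintype ι] [AddCommMonoid M] (f : ι → ι → ι → M) :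
    ∑ a, ∑ b, ∑ c, f a b c = ∑ c, ∑ a, ∑ b, f a b c := by
  rw [Finset.sum_comm (s := Finset.univ (α := ι)) (f := fun c a => ∑ b, f a b c)]
  exact Finset.sum_congr rfl fun _ _ => Finset.sum_comm

theorem sum_swap_pairs {ι M : Type*} [Fintype ι] [AddCommMonoid M] (f : ι → ι → ι → ι → M) :
    ∑ a, ∑ b, ∑ c, ∑ d, f a b c d = ∑ c, ∑ d, ∑ a, ∑ b, f a b c d := by
  rw [sum_rotate_three]
  exact Finset.sum_congr rfl fun _ _ => sum_rotate_three _

/-- For the spherical normal model with unknown variance of dimension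
`d = k + 1 ≥ 2`, the three cumulant contractions appearing in the first-order term take the
constant values `(8d+4)/(d-1)`, `(2d²+4d+2)/(d-1)` and `(6d+2)/(d-1)` respectively, so that
`F₁ = (1/8)(8d+4)/(d-1) - (1/8)(2d²+4d+2)/(d-1) - (1/12)(6d+2)/(d-1)
   = (1-3d²)/(12(d-1))`. -/
theorem stmt_18 (k : ℕ) (hk : 1 ≤ k) (θ : Fin (k + 1) → ℝ)
    (hθ : θ (Fin.last k) < 0) :
    (∑ i₁, ∑ i₂, ∑ i₃, ∑ i₄,
        lderiv [i₁, i₂, i₃, i₄] (psiSph k) θ * (gSph k θ)⁻¹ i₁ i₂ * (gSph k θ)⁻¹ i₃ i₄ =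
      (8 * ((k : ℝ) + 1) + 4) / (k : ℝ)) ∧
    (∑ i₁, ∑ i₂, ∑ i₃, ∑ i₄, ∑ i₅, ∑ i₆,
        lderiv [i₁, i₂, i₃] (psiSph k) θ * lderiv [i₄, i₅, i₆] (psiSph k) θ *
          (gSph k θ)⁻¹ i₁ i₂ * (gSph k θ)⁻¹ i₃ i₄ * (gSph k θ)⁻¹ i₅ i₆ =
      (2 * ((k : ℝ) + 1) ^ 2 + 4 * ((k : ℝ) + 1) + 2) / (k : ℝ)) ∧
    (∑ i₁, ∑ i₂, ∑ i₃, ∑ i₄, ∑ i₅, ∑ i₆,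
        lderiv [i₁, i₂, i₃] (psiSph k) θ * lderiv [i₄, i₅, i₆] (psiSph k) θ *
          (gSph k θ)⁻¹ i₁ i₄ * (gSph k θ)⁻¹ i₂ i₅ * (gSph k θ)⁻¹ i₃ i₆ =
      (6 * ((k : ℝ) + 1) + 2) / (k : ℝ)) ∧
    ((1 / 8) * ((8 * ((k : ℝ) + 1) + 4) / (k : ℝ)) -
        (1 / 8) * ((2 * ((k : ℝ) + 1) ^ 2 + 4 * ((k : ℝ) + 1) + 2) / (k : ℝ)) -
        (1 / 12) * ((6 * ((k : ℝ) + 1) + 2) / (k : ℝ)) =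
      (1 - 3 * ((k : ℝ) + 1) ^ 2) / (12 * (k : ℝ))) := by
  have hk' : (k : ℝ) ≠ 0 := by positivity
  rw [gSph_inv hk hθ]
  refine ⟨?_, ?_, ?_, ?_⟩
  · calc
      _ = ∑ c, ∑ d, (∑ a, ∑ b, lderiv [a, b, c, d] (psiSph k) θ * gInvSph k θ a b) *
          gInvSph k θ c d := by
        simp only [Finset.sum_mul]
        exact sum_swap_pairs _
      _ = _ := by
        simp only [sum_lderiv_four_mul_gInvSph hk hθ, sum_contrSph_mul_gInvSph hk _ hθ]
        ring
  · calc
      _ = ∑ c, ∑ d, (∑ b, ∑ a, lderiv [a, b, c] (psiSph k) θ * gInvSph k θ a b) *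
          (∑ f, ∑ e, lderiv [d, e, f] (psiSph k) θ * gInvSph k θ f e) * gInvSph k θ c d := by
        rw [sum_swap_pairs]
        refine Finset.sum_congr rfl fun c _ => Finset.sum_congr rfl fun d _ => ?_
        rw [Finset.sum_comm]
        simp only [Finset.sum_mul]
        refine Finset.sum_congr rfl fun b _ => Finset.sum_congr rfl fun a _ => ?_
        rw [Finset.sum_comm]
        simp only [Finset.sum_mul, Finset.mul_sum]
        refine Finset.sum_congr rfl fun f _ => Finset.sum_congr rfl fun e _ => ?_
        rw [gInvSph_symm k θ f e]
        ring
      _ = _ := by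
        simp only [sum_lderiv_mul_gInvSph_fst hk hθ, sum_lderiv_mul_gInvSph_snd hk hθ,
          sum_kappaRaised hk hθ, sum_kappaRaised' hk hθ, sum_kappaTrace_mul_kappaTrace hk hθ]
        ring
  · calc
      _ = ∑ c, ∑ f, (∑ d, ∑ b, (∑ a, lderiv [a, b, c] (psiSph k) θ * gInvSph k θ a d) *
          (∑ e, lderiv [d, e, f] (psiSph k) θ * gInvSph k θ b e)) * gInvSph k θ c f := by
        rw [sum_rotate_three]
        refine Finset.sum_congr rfl fun c _ => ?_
        simp_rw [fun a b => sum_rotate_three (fun d e f =>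
          lderiv [a, b, c] (psiSph k) θ * lderiv [d, e, f] (psiSph k) θ *
            gInvSph k θ a d * gInvSph k θ b e * gInvSph k θ c f)]
        rw [sum_rotate_three]
        refine Finset.sum_congr rfl fun f _ => ?_
        rw [sum_rotate_three]
        simp only [Finset.sum_mul]
        refine Finset.sum_congr rfl fun d _ => ?_
        rw [Finset.sum_comm]
        refine Finset.sum_congr rfl fun b _ => Finset.sum_congr rfl fun a _ => ?_
        simp only [Finset.sum_mul, Finset.mul_sum]
        refine Finset.sum_congr rfl fun e _ => ?_
        ring
      _ = _ := by
        simp only [sum_lderiv_mul_gInvSph_fst hk hθ, sum_lderiv_mul_gInvSph_snd hk hθ,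
          sum_kappaRaised_mul_kappaRaised hk hθ, sum_contrSph_mul_gInvSph hk _ hθ]
        ring
  · field_simp
    ring
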